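/- Let n ≥ 1, d = n+1, j ∈ {1,…,n}, let p ∈ ℝⁿ with p ≠ 0, and let f : ℝⁿ\{0} → ℂ be differentiable at p. For x, y ∈ ℝ^d write ⟨x,y⟩_M = x_0 y_0 − Σ_{k=1}^n x_k y_k, φ_y(p) = y_0‖p‖ − Σ_{k=1}^n y_k p_k, and (θx)_μ = Σ_{ν=0}^n θ_{μν} x_ν. Then for every Schwartz function χ : ℝ^d × ℝ^d → ℂ with χ(0,0) = 1, the double integral I(ε) := (2π)^{−d} ∬_{ℝ^d×ℝ^d} χ(εx, εy) e^{−i⟨x,y⟩_M} e^{iφ_y(p)} [ −i ∂f/∂p_j(p) − ((θx)_0 p_j/‖p‖ − (θx)_j) f(p) ] dx dy is absolutely convergent for every ε > 0 and lim_{ε→0⁺} I(ε) = −i ∂f/∂p_j(p) − g_0(p)(p_j/‖p‖) f(p) + g_j(p) f(p) = (A_j f)(p). (One-particle warped convolution of the spatial coordinate operator: X_j^θ = X_j − g_0 V_j + g_j.) -/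

import Mathlib

open MeasureTheory Real Filter
open scoped SchwartzMap

noncomputable section

/-- ℝⁿ as a Euclidean space. -/
abbrev Eu (n : ℕ) := EuclideanSpace ℝ (Fin n)

/-- Partial derivative ∂f/∂p_j at p. -/
def pd {n : ℕ} (j : Fin n) (f : Eu n → ℂ) (p : Eu n) : ℂ :=
  fderiv ℝ f p (EuclideanSpace.single j 1)

/-- g_μ(p) = θ_{μ0}‖p‖ + Σ_{k=1}^n θ_{μk} p_k. -/
def gθ {n : ℕ} (θ : Fin (n + 1) → Fin (n + 1) → ℝ) (μ : Fin (n + 1)) (p : Eu n) : ℝ :=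
  θ μ 0 * ‖p‖ + ∑ k : Fin n, θ μ k.succ * p k

/-- Minkowski pairing ⟨x,y⟩_M = x₀y₀ − Σ_{k=1}ⁿ x_k y_k on ℝ^{n+1}. -/
def mink {n : ℕ} (x y : Eu (n + 1)) : ℝ :=
  x 0 * y 0 - ∑ k : Fin n, x k.succ * y k.succ

/-- Mass-shell translation phase φ_y(p) = y₀‖p‖ − Σ_{k=1}ⁿ y_k p_k. -/
def phase {n : ℕ} (y : Eu (n + 1)) (p : Eu n) : ℝ :=
  y 0 * ‖p‖ - ∑ k : Fin n, y k.succ * p k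

/-- (θx)_μ = Σ_ν θ_{μν} x_ν. -/
def thetaC {n : ℕ} (θ : Fin (n + 1) → Fin (n + 1) → ℝ) (x : Eu (n + 1))
    (μ : Fin (n + 1)) : ℝ :=
  ∑ ν : Fin (n + 1), θ μ ν * x ν

/-- The integrand of the warped-convolution oscillatory integral for the spatial
coordinate operator. -/
def integrand {n : ℕ} (θ : Fin (n + 1) → Fin (n + 1) → ℝ) (j : Fin n) (p : Eu n)
    (f : Eu n → ℂ) (χ : 𝓢(Eu (n + 1) × Eu (n + 1), ℂ)) (ε : ℝ)
    (z : Eu (n + 1) × Eu (n + 1)) : ℂ :=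
  χ (ε • z.1, ε • z.2) * Complex.exp (-Complex.I * (mink z.1 z.2 : ℝ))
    * Complex.exp (Complex.I * (phase z.2 p : ℝ))
    * (-Complex.I * pd j f p
        - ((thetaC θ z.1 0 * (p j / ‖p‖) - thetaC θ z.1 j.succ : ℝ) : ℂ) * f p)

/-!
At scale `ε`, substituting `y = v / ε` and `x = q + 2πε J⁻¹ w` turns the oscillatory integral with
phase `⟨y, J (x - q)⟩` into the integral over `w` of the Fourier transform of `χ` in its second
variable, at first variable `O(ε)`, against the amplitude `L` at `q + O(ε)`. That transform decays
rapidly in `w`, uniformly in the first variable, because the slices of `χ` form a bounded set in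
Schwartz space. Dominated convergence and Fourier inversion give the limit `χ(0, 0) L(q)`. For the
warped convolution, `J` reflects the spatial axes and the phase `⟨x, y⟩_M - φ_y(p)` is stationary
in `y` at the mass-shell point `q = (‖p‖, p)`, where `θq = g(p)`.
-/

open FourierTransform Topology Bornology
open scoped RealInnerProductSpace

section Slice

variable {E F W : Type*} [NormedAddCommGroup E] [NormedSpace ℝ E] [NormedAddCommGroup F]
  [NormedSpace ℝ F] [NormedAddCommGroup W] [NormedSpace ℝ W]

theorem norm_iteratedFDeriv_comp_prodMk_left_le {f : E × F → W} {m : ℕ} (hf : ContDiff ℝ m f)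
    (a : E) (v : F) :
    ‖iteratedFDeriv ℝ m (fun v => f (a, v)) v‖ ≤ ‖iteratedFDeriv ℝ m f (a, v)‖ := by
  have htranslate : ContDiff ℝ m (fun z => f ((a, 0) + z)) :=
    hf.comp (contDiff_const.add contDiff_id)
  have hslice : (fun v => f (a, v))
      = (fun z => f ((a, 0) + z)) ∘ ContinuousLinearMap.inr ℝ E F := by
    ext v
    simp
  rw [hslice, ContinuousLinearMap.iteratedFDeriv_comp_right _ htranslate _ le_rfl,
    iteratedFDeriv_comp_add_left]
  refine (ContinuousMultilinearMap.norm_compContinuousLinearMap_le _ _).trans ?_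
  simp only [ContinuousLinearMap.inr_apply, Prod.mk_add_mk, add_zero, zero_add]
  exact mul_le_of_le_one_right (norm_nonneg _) <| Finset.prod_le_one
    (fun _ _ => norm_nonneg _) (fun _ _ => ContinuousLinearMap.norm_inr_le_one ℝ E F)

theorem norm_pow_mul_norm_iteratedFDeriv_comp_prodMk_left_le (χ : 𝓢(E × F, W)) (a : E)
    (k m : ℕ) (v : F) :
    ‖v‖ ^ k * ‖iteratedFDeriv ℝ m (fun v => χ (a, v)) v‖ ≤ SchwartzMap.seminorm ℝ k m χ := by
  refine le_trans ?_ (χ.le_seminorm ℝ k m (a, v))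
  gcongr
  · exact norm_snd_le (a, v)
  · exact norm_iteratedFDeriv_comp_prodMk_left_le (χ.smooth m) a v

/-- The slice `v ↦ χ (a, v)` of a Schwartz function on a product, as a Schwartz function. -/
def schwartzSlice (χ : 𝓢(E × F, W)) (a : E) : 𝓢(F, W) where
  toFun v := χ (a, v)
  smooth' := (χ.smooth ⊤).comp (contDiff_const.prodMk contDiff_id)
  decay' k m := ⟨_, norm_pow_mul_norm_iteratedFDeriv_comp_prodMk_left_le χ a k m⟩

@[simp]
theorem schwartzSlice_apply (χ : 𝓢(E × F, W)) (a : E) (v : F) :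
    schwartzSlice χ a v = χ (a, v) := rfl

theorem seminorm_schwartzSlice_le (χ : 𝓢(E × F, W)) (a : E) (k m : ℕ) :
    SchwartzMap.seminorm ℝ k m (schwartzSlice χ a) ≤ SchwartzMap.seminorm ℝ k m χ :=
  SchwartzMap.seminorm_le_bound ℝ k m _ (apply_nonneg _ _)
    (norm_pow_mul_norm_iteratedFDeriv_comp_prodMk_left_le χ a k m)

theorem isVonNBounded_range_schwartzSlice (χ : 𝓢(E × F, W)) :
    IsVonNBounded ℝ (Set.range (schwartzSlice χ)) := by
  rw [(schwartz_withSeminorms ℝ F W).isVonNBounded_iff_seminorm_bounded]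
  rintro ⟨k, m⟩
  refine ⟨SchwartzMap.seminorm ℝ k m χ + 1, by positivity, ?_⟩
  rintro _ ⟨a, rfl⟩
  exact (seminorm_schwartzSlice_le χ a k m).trans_lt (lt_add_one _)

theorem exists_norm_le_one_add_norm_rpow_of_isVonNBounded {s : Set 𝓢(F, W)}
    (hs : IsVonNBounded ℝ s) (k : ℕ) :
    ∃ C : ℝ, 0 ≤ C ∧ ∀ f ∈ s, ∀ x, ‖f x‖ ≤ C * (1 + ‖x‖) ^ (-(k : ℝ)) := by
  obtain ⟨r, hr, hsr⟩ := (schwartz_withSeminorms ℝ F W).isVonNBounded_iff_finset_seminorm_bounded.1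
    hs (Finset.Iic (k, 0))
  refine ⟨2 ^ k * r, by positivity, fun f hf x => ?_⟩
  have hdecay := SchwartzMap.one_add_le_sup_seminorm_apply (𝕜 := ℝ) (m := (k, 0)) le_rfl le_rfl f x
  rw [norm_iteratedFDeriv_zero] at hdecay
  rw [Real.rpow_neg (by positivity), Real.rpow_natCast, ← div_eq_mul_inv,
    le_div_iff₀' (by positivity)]
  exact hdecay.trans (by gcongr; exact (hsr f hf).le)

end Slice

section PartialFourier

variable {E F W : Type*} [NormedAddCommGroup E] [NormedSpace ℝ E] [NormedAddCommGroup F]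
  [InnerProductSpace ℝ F] [FiniteDimensional ℝ F] [MeasurableSpace F] [BorelSpace F]
  [NormedAddCommGroup W] [NormedSpace ℂ W]

/-- The Fourier transform of a Schwartz function on `E × F` in its second variable. -/
def partialFourier (χ : 𝓢(E × F, W)) (a : E) (w : F) : W :=
  𝓕 (schwartzSlice χ a) w

theorem partialFourier_eq_integral (χ : 𝓢(E × F, W)) (a : E) (w : F) :
    partialFourier χ a w
      = ∫ v, Complex.exp (((-2 * π * ⟪v, w⟫ : ℝ) : ℂ) * Complex.I) • χ (a, v) := by
  simp only [partialFourier, SchwartzMap.fourier_coe, Real.fourier_eq', schwartzSlice_apply]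

theorem continuous_partialFourier (χ : 𝓢(E × F, W)) :
    Continuous fun z : E × F => partialFourier χ z.1 z.2 := by
  obtain ⟨C, -, hC⟩ := exists_norm_le_one_add_norm_rpow_of_isVonNBounded
    (isVonNBounded_range_schwartzSlice χ) (volume : Measure F).integrablePower
  simp only [partialFourier_eq_integral]
  refine continuous_of_dominated
    (fun z => Continuous.aestronglyMeasurable (by fun_prop))
    (fun z => Eventually.of_forall fun v => ?_)
    ((Measure.integrable_pow_neg_integrablePower volume).const_mul C)
    (Eventually.of_forall fun v => by fun_prop)
  rw [norm_smul, Complex.norm_exp_ofReal_mul_I, one_mul]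
  exact hC _ ⟨z.1, rfl⟩ v

theorem exists_norm_partialFourier_le (χ : 𝓢(E × F, W)) (k : ℕ) :
    ∃ C : ℝ, 0 ≤ C ∧ ∀ a w, ‖partialFourier χ a w‖ ≤ C * (1 + ‖w‖) ^ (-(k : ℝ)) := by
  have hbounded := (isVonNBounded_range_schwartzSlice χ).image (fourierCLM ℝ 𝓢(F, W))
  obtain ⟨C, hC0, hC⟩ := exists_norm_le_one_add_norm_rpow_of_isVonNBounded hbounded k
  exact ⟨C, hC0, fun a => hC _ (Set.mem_image_of_mem _ ⟨a, rfl⟩)⟩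

theorem integral_partialFourier [CompleteSpace W] (χ : 𝓢(E × F, W)) (a : E) :
    ∫ w, partialFourier χ a w = χ (a, 0) := by
  have hinv : 𝓕⁻ (𝓕 (schwartzSlice χ a)) 0 = χ (a, 0) := by
    rw [fourierInv_fourier_eq, schwartzSlice_apply]
  rw [SchwartzMap.fourierInv_coe, Real.fourierInv_eq'] at hinv
  simpa [partialFourier] using hinv

theorem integral_exp_inner_smul_comp_smul (χ : 𝓢(E × F, W)) (a : E) (u : F) {ε : ℝ}
    (hε : 0 < ε) :
    ∫ y, Complex.exp (((-⟪y, u⟫ : ℝ) : ℂ) * Complex.I) • χ (a, ε • y)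
      = (ε ^ Module.finrank ℝ F)⁻¹ • partialFourier χ a ((2 * π * ε)⁻¹ • u) := by
  have hphase : ∀ y : F, -2 * π * ⟪ε • y, (2 * π * ε)⁻¹ • u⟫ = -⟪y, u⟫ := fun y => by
    rw [real_inner_smul_left, real_inner_smul_right]
    field_simp
  rw [partialFourier_eq_integral, ← Measure.integral_comp_smul_of_nonneg _ _ _ (hR := hε.le)]
  simp only [hphase]

end PartialFourier

section Oscillatory

theorem integral_comp_add_smul_linearIsometryEquiv {E F V : Type*} [NormedAddCommGroup E]
    [InnerProductSpace ℝ E] [FiniteDimensional ℝ E] [MeasurableSpace E] [BorelSpace E]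
    [NormedAddCommGroup F] [InnerProductSpace ℝ F] [FiniteDimensional ℝ F] [MeasurableSpace F]
    [BorelSpace F] [NormedAddCommGroup V] [NormedSpace ℝ V] (G : E → V) (J : F ≃ₗᵢ[ℝ] E) (q : E)
    {R : ℝ} (hR : 0 ≤ R) :
    ∫ w, G (q + R • J w) = (R ^ Module.finrank ℝ F)⁻¹ • ∫ x, G x := by
  rw [J.measurePreserving.integral_comp J.toHomeomorph.measurableEmbedding
      fun x => G (q + R • x),
    Measure.integral_comp_smul_of_nonneg volume (fun x => G (q + x)) R (hR := hR),
    integral_add_left_eq_self, J.toLinearEquiv.finrank_eq]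

theorem one_add_norm_add_smul_le {E : Type*} [SeminormedAddCommGroup E] [NormedSpace ℝ E] {t R : ℝ}
    (ht : |t| ≤ R) (q w : E) : 1 + ‖q + t • w‖ ≤ (1 + ‖q‖ + R) * (1 + ‖w‖) := by
  have hR : 0 ≤ R := (abs_nonneg t).trans ht
  calc 1 + ‖q + t • w‖ ≤ 1 + (‖q‖ + R * ‖w‖) := by
        grw [norm_add_le, norm_smul, Real.norm_eq_abs, ht]
    _ ≤ (1 + ‖q‖ + R) * (1 + ‖w‖) := by
        linarith [mul_nonneg (add_nonneg zero_le_one (norm_nonneg q)) (norm_nonneg w)]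

theorem integrable_schwartz_smul {E V : Type*} [NormedAddCommGroup E] [NormedSpace ℝ E]
    [MeasurableSpace E] [BorelSpace E] [SecondCountableTopology E] [NormedAddCommGroup V]
    [NormedSpace ℂ V] {μ : Measure E} [μ.HasTemperateGrowth] (ψ : 𝓢(E, ℂ)) {L : E → V}
    (hL : AEStronglyMeasurable L μ) {C : ℝ} {N : ℕ} (hLC : ∀ x, ‖L x‖ ≤ C * (1 + ‖x‖) ^ N) :
    Integrable (fun x => ψ x • L x) μ := by
  have hC : 0 ≤ C := by simpa using (norm_nonneg _).trans (hLC 0)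
  have hbound : Integrable (fun x => C * 2 ^ (N - 1) * (‖ψ x‖ + ‖x‖ ^ N * ‖ψ x‖)) μ :=
    (ψ.integrable.norm.add (ψ.integrable_pow_mul μ N)).const_mul _
  refine hbound.mono' (ψ.continuous.aestronglyMeasurable.smul hL)
    (Eventually.of_forall fun x => ?_)
  calc ‖ψ x • L x‖ ≤ ‖ψ x‖ * (C * (2 ^ (N - 1) * (1 ^ N + ‖x‖ ^ N))) := by
        rw [norm_smul]
        gcongr
        exact (hLC x).trans (by gcongr; exact add_pow_le zero_le_one (norm_nonneg x) N)
    _ = C * 2 ^ (N - 1) * (‖ψ x‖ + ‖x‖ ^ N * ‖ψ x‖) := by ring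

variable {E F V : Type*} [NormedAddCommGroup E] [InnerProductSpace ℝ E] [NormedAddCommGroup F]
  [InnerProductSpace ℝ F] [NormedAddCommGroup V] [NormedSpace ℂ V]

/-- The integrand at scale `ε` of the regularized oscillatory integral with amplitude `L`, cutoff
`χ` and bilinear phase `⟨y, J (x - q)⟩`. -/
def oscillatoryIntegrand (χ : 𝓢(E × F, ℂ)) (J : E ≃ₗᵢ[ℝ] F) (q : E) (L : E → V) (ε : ℝ)
    (z : E × F) : V :=
  χ (ε • z) • Complex.exp (((-⟪z.2, J (z.1 - q)⟫ : ℝ) : ℂ) * Complex.I) • L z.1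

variable [FiniteDimensional ℝ F] [MeasurableSpace F] [BorelSpace F]

/-- The integrand obtained from `oscillatoryIntegrand χ J q L ε`, up to the factor `(2π)^dim F`,
by integrating out the second variable and substituting `x = q + 2πε J⁻¹ w`. -/
def rescaledIntegrand (χ : 𝓢(E × F, ℂ)) (J : E ≃ₗᵢ[ℝ] F) (q : E) (L : E → V) (ε : ℝ)
    (w : F) : V :=
  partialFourier χ (ε • (q + (2 * π * ε) • J.symm w)) w • L (q + (2 * π * ε) • J.symm w)

variable {L : E → V} {C : ℝ} {N : ℕ}

theorem continuous_rescaledIntegrand (χ : 𝓢(E × F, ℂ)) (J : E ≃ₗᵢ[ℝ] F) (q : E)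
    (hL : Continuous L) :
    Continuous fun εw : ℝ × F => rescaledIntegrand χ J q L εw.1 εw.2 := by
  have hpoint : Continuous fun εw : ℝ × F => q + (2 * π * εw.1) • J.symm εw.2 := by fun_prop
  have hfourier := (continuous_partialFourier χ).comp
    ((continuous_fst.smul hpoint).prodMk continuous_snd)
  exact hfourier.smul (hL.comp hpoint)

theorem exists_norm_rescaledIntegrand_le (χ : 𝓢(E × F, ℂ)) (J : E ≃ₗᵢ[ℝ] F) (q : E)
    (hLC : ∀ x, ‖L x‖ ≤ C * (1 + ‖x‖) ^ N) (k : ℕ) :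
    ∃ D : ℝ, ∀ ε : ℝ, |ε| ≤ 1 → ∀ w,
      ‖rescaledIntegrand χ J q L ε w‖ ≤ D * (1 + ‖w‖) ^ (-(k : ℝ)) := by
  have hC : 0 ≤ C := by simpa using (norm_nonneg _).trans (hLC 0)
  obtain ⟨D, hD0, hD⟩ := exists_norm_partialFourier_le χ (k + N)
  refine ⟨D * (C * (1 + ‖q‖ + 2 * π) ^ N), fun ε hε w => ?_⟩
  have hscale : |2 * π * ε| ≤ 2 * π := by
    rw [abs_mul, abs_of_pos two_pi_pos]
    exact mul_le_of_le_one_right two_pi_pos.le hε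
  have hamplitude : ‖L (q + (2 * π * ε) • J.symm w)‖
      ≤ C * ((1 + ‖q‖ + 2 * π) * (1 + ‖w‖)) ^ N := by
    refine (hLC _).trans ?_
    gcongr
    simpa using one_add_norm_add_smul_le hscale q (J.symm w)
  calc ‖rescaledIntegrand χ J q L ε w‖
      ≤ D * (1 + ‖w‖) ^ (-((k + N : ℕ) : ℝ)) * (C * ((1 + ‖q‖ + 2 * π) * (1 + ‖w‖)) ^ N) := by
        rw [rescaledIntegrand, norm_smul]
        gcongr
        exact hD _ w
    _ = D * (C * (1 + ‖q‖ + 2 * π) ^ N) * (1 + ‖w‖) ^ (-(k : ℝ)) := by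
        rw [Real.rpow_neg (by positivity), Real.rpow_neg (by positivity), Real.rpow_natCast,
          Real.rpow_natCast, pow_add, mul_pow]
        field_simp

theorem continuousAt_integral_rescaledIntegrand (χ : 𝓢(E × F, ℂ)) (J : E ≃ₗᵢ[ℝ] F) (q : E)
    (hL : Continuous L) (hLC : ∀ x, ‖L x‖ ≤ C * (1 + ‖x‖) ^ N) :
    ContinuousAt (fun ε : ℝ => ∫ w, rescaledIntegrand χ J q L ε w) 0 := by
  have hcont := continuous_rescaledIntegrand χ J q hL
  obtain ⟨D, hD⟩ := exists_norm_rescaledIntegrand_le χ J q hLC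
    (volume : Measure F).integrablePower
  refine continuousAt_of_dominated
    (Eventually.of_forall fun ε => (hcont.comp (.prodMk_right ε)).aestronglyMeasurable) ?_
    ((Measure.integrable_pow_neg_integrablePower volume).const_mul D)
    (Eventually.of_forall fun w => (hcont.comp (.prodMk_left w)).continuousAt)
  filter_upwards [Icc_mem_nhds (neg_one_lt_zero (R := ℝ)) one_pos] with ε hε
  exact Eventually.of_forall (hD ε (abs_le.2 hε))

theorem integral_rescaledIntegrand_zero [CompleteSpace V] (χ : 𝓢(E × F, ℂ)) (J : E ≃ₗᵢ[ℝ] F)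
    (q : E) (L : E → V) : ∫ w, rescaledIntegrand χ J q L 0 w = χ 0 • L q := by
  simp only [rescaledIntegrand, zero_smul, mul_zero, add_zero, integral_smul_const,
    integral_partialFourier, ← Prod.zero_eq_mk]

variable [FiniteDimensional ℝ E] [MeasurableSpace E] [BorelSpace E]

theorem integrable_oscillatoryIntegrand (χ : 𝓢(E × F, ℂ)) (J : E ≃ₗᵢ[ℝ] F) (q : E)
    (hL : Continuous L) (hLC : ∀ x, ‖L x‖ ≤ C * (1 + ‖x‖) ^ N) {ε : ℝ} (hε : ε ≠ 0) :
    Integrable (oscillatoryIntegrand χ J q L ε) := by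
  have hC : 0 ≤ C := by simpa using (norm_nonneg _).trans (hLC 0)
  have : (volume : Measure (E × F)).IsAddHaarMeasure :=
    inferInstanceAs ((volume : Measure E).prod (volume : Measure F)).IsAddHaarMeasure
  let dilation : (E × F) ≃L[ℝ] E × F := ContinuousLinearEquiv.smulLeft (Units.mk0 ε hε)
  refine integrable_schwartz_smul (SchwartzMap.compCLMOfContinuousLinearEquiv ℂ dilation χ)
    (C := C) (N := N) (Continuous.aestronglyMeasurable (by fun_prop)) fun z => ?_
  rw [norm_smul, Complex.norm_exp_ofReal_mul_I, one_mul]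
  exact (hLC z.1).trans (by gcongr; exact norm_fst_le z)

theorem integral_oscillatoryIntegrand [CompleteSpace V] (χ : 𝓢(E × F, ℂ)) (J : E ≃ₗᵢ[ℝ] F)
    (q : E) (hL : Continuous L) (hLC : ∀ x, ‖L x‖ ≤ C * (1 + ‖x‖) ^ N) {ε : ℝ} (hε : 0 < ε) :
    ∫ z, oscillatoryIntegrand χ J q L ε z
      = (2 * π) ^ Module.finrank ℝ F • ∫ w, rescaledIntegrand χ J q L ε w := by
  let G : E → V := fun x => partialFourier χ (ε • x) ((2 * π * ε)⁻¹ • J (x - q)) • L x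
  have hR : 0 < 2 * π * ε := by positivity
  have hfibre : ∀ x, ∫ y, oscillatoryIntegrand χ J q L ε (x, y)
      = (ε ^ Module.finrank ℝ F)⁻¹ • G x := fun x => by
    simp only [oscillatoryIntegrand, smul_comm (χ _)]
    simp only [← smul_assoc, Prod.smul_mk, integral_smul_const,
      integral_exp_inner_smul_comp_smul χ _ _ hε, G]
  have hsubst : ∀ w, G (q + (2 * π * ε) • J.symm w) = rescaledIntegrand χ J q L ε w := fun w => by
    simp only [G, rescaledIntegrand, add_sub_cancel_left, map_smul,
      LinearIsometryEquiv.apply_symm_apply, inv_smul_smul₀ hR.ne']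
  calc ∫ z, oscillatoryIntegrand χ J q L ε z
      = ∫ x, ∫ y, oscillatoryIntegrand χ J q L ε (x, y) :=
        integral_prod _ (integrable_oscillatoryIntegrand χ J q hL hLC hε.ne')
    _ = (ε ^ Module.finrank ℝ F)⁻¹ • ∫ x, G x := by simp only [hfibre, integral_smul]
    _ = (2 * π) ^ Module.finrank ℝ F • ∫ w, G (q + (2 * π * ε) • J.symm w) := by
        rw [integral_comp_add_smul_linearIsometryEquiv G J.symm q hR.le, smul_smul]
        congr 1
        rw [mul_pow _ ε]
        field_simp
    _ = (2 * π) ^ Module.finrank ℝ F • ∫ w, rescaledIntegrand χ J q L ε w := by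
        simp only [hsubst]

theorem tendsto_integral_oscillatoryIntegrand [CompleteSpace V] (χ : 𝓢(E × F, ℂ))
    (J : E ≃ₗᵢ[ℝ] F) (q : E) (hL : Continuous L) (hLC : ∀ x, ‖L x‖ ≤ C * (1 + ‖x‖) ^ N) :
    Tendsto (fun ε : ℝ => ((2 * π) ^ Module.finrank ℝ F)⁻¹ •
        ∫ z, oscillatoryIntegrand χ J q L ε z)
      (𝓝[>] 0) (𝓝 (χ 0 • L q)) := by
  have hlim := (continuousAt_integral_rescaledIntegrand χ J q hL hLC).tendsto
  rw [integral_rescaledIntegrand_zero] at hlim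
  refine (hlim.mono_left nhdsWithin_le_nhds).congr' ?_
  filter_upwards [self_mem_nhdsWithin] with ε hε
  rw [integral_oscillatoryIntegrand χ J q hL hLC hε, inv_smul_smul₀ (by positivity)]

end Oscillatory

section WarpedConvolution

variable {n : ℕ}

/-- The reflection `(x₀, x₁, …, xₙ) ↦ (x₀, -x₁, …, -xₙ)`, which turns the Euclidean inner product
into the Minkowski pairing. -/
def spatialReflection (n : ℕ) : Eu (n + 1) ≃ₗᵢ[ℝ] Eu (n + 1) :=
  LinearIsometryEquiv.piLpCongrRight 2
    (Fin.cons (LinearIsometryEquiv.refl ℝ ℝ) fun _ => LinearIsometryEquiv.neg ℝ)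

/-- The point `(‖p‖, p)` of the mass shell. -/
def onShell (p : Eu n) : Eu (n + 1) :=
  WithLp.toLp 2 (Fin.cons ‖p‖ p)

/-- The value at `p` of the momentum-space coordinate operator `-i∂_j`, translated by `θx` and
applied to `f`; it is the amplitude of the warped convolution. -/
def translatedCoordinate (θ : Fin (n + 1) → Fin (n + 1) → ℝ) (j : Fin n) (p : Eu n)
    (f : Eu n → ℂ) (x : Eu (n + 1)) : ℂ :=
  -Complex.I * pd j f p - ((thetaC θ x 0 * (p j / ‖p‖) - thetaC θ x j.succ : ℝ) : ℂ) * f p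

theorem inner_spatialReflection (x y : Eu (n + 1)) :
    ⟪y, spatialReflection n x⟫ = mink x y := by
  simp [spatialReflection, mink, PiLp.inner_apply, Fin.sum_univ_succ,
    LinearIsometryEquiv.piLpCongrRight_apply, sub_eq_add_neg]

theorem mink_onShell (p : Eu n) (y : Eu (n + 1)) : mink (onShell p) y = phase y p := by
  simp [mink, onShell, phase, mul_comm]

theorem thetaC_onShell (θ : Fin (n + 1) → Fin (n + 1) → ℝ) (p : Eu n) (μ : Fin (n + 1)) :
    thetaC θ (onShell p) μ = gθ θ μ p := by
  simp [thetaC, onShell, gθ, Fin.sum_univ_succ]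

theorem translatedCoordinate_onShell (θ : Fin (n + 1) → Fin (n + 1) → ℝ) (j : Fin n) (p : Eu n)
    (f : Eu n → ℂ) :
    translatedCoordinate θ j p f (onShell p)
      = -Complex.I * pd j f p - ((gθ θ 0 p * (p j / ‖p‖) : ℝ) : ℂ) * f p
        + ((gθ θ j.succ p : ℝ) : ℂ) * f p := by
  simp only [translatedCoordinate, thetaC_onShell]
  push_cast
  ring

theorem hasTemperateGrowth_thetaC (θ : Fin (n + 1) → Fin (n + 1) → ℝ) (μ : Fin (n + 1)) :
    (fun x => thetaC θ x μ).HasTemperateGrowth := by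
  have hcoord : ∀ ν, (fun x : Eu (n + 1) => x ν).HasTemperateGrowth := fun ν =>
    (EuclideanSpace.proj (𝕜 := ℝ) ν).hasTemperateGrowth
  exact .sum fun ν _ => .mul (.const _) (hcoord ν)

theorem hasTemperateGrowth_translatedCoordinate (θ : Fin (n + 1) → Fin (n + 1) → ℝ) (j : Fin n)
    (p : Eu n) (f : Eu n → ℂ) : (translatedCoordinate θ j p f).HasTemperateGrowth := by
  have htime := hasTemperateGrowth_thetaC θ 0
  have hspace := hasTemperateGrowth_thetaC θ j.succ
  unfold translatedCoordinate
  fun_prop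

theorem integrand_eq_oscillatoryIntegrand (θ : Fin (n + 1) → Fin (n + 1) → ℝ) (j : Fin n)
    (p : Eu n) (f : Eu n → ℂ) (χ : 𝓢(Eu (n + 1) × Eu (n + 1), ℂ)) (ε : ℝ) :
    integrand θ j p f χ ε = oscillatoryIntegrand χ (spatialReflection n) (onShell p)
      (translatedCoordinate θ j p f) ε := by
  ext z
  have hphase : ⟪z.2, spatialReflection n (z.1 - onShell p)⟫ = mink z.1 z.2 - phase z.2 p := by
    rw [map_sub, inner_sub_right, inner_spatialReflection, inner_spatialReflection, mink_onShell]
  rw [integrand, mul_assoc (χ _), ← Complex.exp_add, oscillatoryIntegrand, hphase, smul_eq_mul,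
    smul_eq_mul, ← mul_assoc]
  simp only [translatedCoordinate]
  congr 3
  push_cast
  ring

end WarpedConvolution

theorem stmt1_general {n : ℕ} (θ : Fin (n + 1) → Fin (n + 1) → ℝ) (j : Fin n) (p : Eu n)
    (_hp : p ≠ 0) (f : Eu n → ℂ) (_hf : DifferentiableAt ℝ f p)
    (χ : 𝓢(Eu (n + 1) × Eu (n + 1), ℂ)) (hχ : χ (0, 0) = 1) :
    (∀ ε : ℝ, 0 < ε → Integrable (integrand θ j p f χ ε)) ∧
      Tendsto
        (fun ε : ℝ => (((2 * Real.pi) ^ (n + 1) : ℝ)⁻¹ : ℂ) * ∫ z, integrand θ j p f χ ε z)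
        (𝓝[>] 0)
        (𝓝 (-Complex.I * pd j f p - ((gθ θ 0 p * (p j / ‖p‖) : ℝ) : ℂ) * f p
          + ((gθ θ j.succ p : ℝ) : ℂ) * f p)) := by
  have hgrowth := hasTemperateGrowth_translatedCoordinate θ j p f
  have hL : Continuous (translatedCoordinate θ j p f) := hgrowth.1.continuous
  obtain ⟨N, C, hLC⟩ := hgrowth.2 0
  simp only [norm_iteratedFDeriv_zero] at hLC
  simp only [integrand_eq_oscillatoryIntegrand]
  refine ⟨fun ε hε => integrable_oscillatoryIntegrand χ _ _ hL hLC hε.ne', ?_⟩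
  have hlim := tendsto_integral_oscillatoryIntegrand χ (spatialReflection n) (onShell p) hL hLC
  rw [Prod.zero_eq_mk, hχ, one_smul, translatedCoordinate_onShell, finrank_euclideanSpace_fin]
    at hlim
  simpa only [Complex.real_smul, Complex.ofReal_inv] using hlim

/-- One-particle warped convolution of the spatial coordinate operator: the regularized
oscillatory double integral is absolutely convergent for every ε > 0 and converges, as
ε → 0⁺, to (A_j f)(p) = −i ∂f/∂p_j(p) − g₀(p)(p_j/‖p‖) f(p) + g_j(p) f(p). -/
theorem stmt1 {n : ℕ} (hn : 1 ≤ n) (θ : Fin (n + 1) → Fin (n + 1) → ℝ)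
    (hθ00 : θ 0 0 = 0)
    (hθ0 : ∀ j : Fin n, θ 0 j.succ = θ j.succ 0)
    (hθs : ∀ i j : Fin n, θ i.succ j.succ = -θ j.succ i.succ)
    (j : Fin n) (p : Eu n) (hp : p ≠ 0)
    (f : Eu n → ℂ) (hf : DifferentiableAt ℝ f p)
    (χ : 𝓢(Eu (n + 1) × Eu (n + 1), ℂ)) (hχ : χ (0, 0) = 1) :
    (∀ ε : ℝ, 0 < ε → Integrable (integrand θ j p f χ ε)) ∧
      Tendsto
        (fun ε : ℝ => (((2 * Real.pi) ^ (n + 1) : ℝ)⁻¹ : ℂ) * ∫ z, integrand θ j p f χ ε z)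
        (nhdsWithin 0 (Set.Ioi 0))
        (nhds (-Complex.I * pd j f p
          - ((gθ θ 0 p * (p j / ‖p‖) : ℝ) : ℂ) * f p
          + ((gθ θ j.succ p : ℝ) : ℂ) * f p)) :=
  stmt1_general θ j p hp f hf χ hχ

end
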